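/- For every fixed integer m ≥ 2, as x → ∞, ∑_{3 ≤ n ≤ x} 1/li(n) = (1/2)·log² x − log x − log log x + E + k_2/log x + k_3/(2·log² x) + ... + k_m/((m−1)·log^{m−1} x) + O(1/log^m x), for some constant E independent of m, where the k_j satisfy k_j + 1!·k_{j−1} + ... + (j−1)!·k_1 = j·j!. -/

import Mathlib

open Filter Real

noncomputable def li (x : ℝ) : ℝ := ∫ t in (2:ℝ)..x, 1 / Real.log t

theorem abs_sub_le_sub_of_abs_deriv_le {f f' u u' : ℝ → ℝ} {a : ℝ}
    (hf : ∀ x, a ≤ x → HasDerivAt f (f' x) x) (hu : ∀ x, a ≤ x → HasDerivAt u (u' x) x)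
    (h : ∀ x, a ≤ x → |f' x| ≤ u' x) {x y : ℝ} (hx : a ≤ x) (hxy : x ≤ y) :
    |f y - f x| ≤ u y - u x := by
  have key : ∀ g g' : ℝ → ℝ, (∀ x, a ≤ x → HasDerivAt g (g' x) x) →
      (∀ x, a ≤ x → 0 ≤ g' x) → g x ≤ g y := by
    intro g g' hg hg'
    refine monotoneOn_of_deriv_nonneg (convex_Ici a)
      (fun t ht => (hg t ht).continuousAt.continuousWithinAt)
      (fun t ht => (hg t (interior_subset ht)).differentiableAt.differentiableWithinAt)
      (fun t ht => ?_) hx (hx.trans hxy) hxy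
    rw [(hg t (interior_subset ht)).deriv]
    exact hg' t (interior_subset ht)
  have h1 := key (fun t => u t - f t) _ (fun t ht => (hu t ht).sub (hf t ht))
    (fun t ht => by have := abs_le.1 (h t ht); linarith)
  have h2 := key (fun t => u t + f t) _ (fun t ht => (hu t ht).add (hf t ht))
    (fun t ht => by have := abs_le.1 (h t ht); linarith)
  rw [abs_le]
  constructor <;> linarith

theorem exists_isBigO_sub_of_abs_sub_le {D B : ℝ → ℝ} {a : ℝ}
    (h : ∀ x, a ≤ x → ∀ y, x ≤ y → |D y - D x| ≤ B x) (hB : Tendsto B atTop (nhds 0)) :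
    ∃ E, (fun x => D x - E) =O[atTop] B := by
  have hc : Cauchy (map D atTop) := by
    rw [Metric.cauchy_iff]
    refine ⟨inferInstance, fun ε hε => ?_⟩
    obtain ⟨x, hx, hxa⟩ := ((hB.eventually (gt_mem_nhds (half_pos hε))).and
      (eventually_ge_atTop a)).exists
    refine ⟨D '' Set.Ici x, image_mem_map (Ici_mem_atTop x), ?_⟩
    rintro _ ⟨y, hy, rfl⟩ _ ⟨z, hz, rfl⟩
    have h1 := abs_le.1 (h x hxa y hy)
    have h2 := abs_le.1 (h x hxa z hz)
    rw [Real.dist_eq, abs_lt]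
    constructor <;> linarith
  obtain ⟨E, hE⟩ := CompleteSpace.complete hc
  have hE : Tendsto D atTop (nhds E) := hE
  refine ⟨E, Asymptotics.IsBigO.of_bound 1 ?_⟩
  filter_upwards [eventually_ge_atTop a] with x hx
  have h1 : |E - D x| ≤ B x :=
    le_of_tendsto (hE.sub_const (D x)).abs (by
      filter_upwards [eventually_ge_atTop x] with y hy using h x hx y hy)
  rw [one_mul, Real.norm_eq_abs, Real.norm_eq_abs, abs_sub_comm]
  exact h1.trans (le_abs_self _)

theorem hasDerivAt_li {x : ℝ} (hx : 1 < x) : HasDerivAt li (1 / log x) x := by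
  have hc : ContinuousOn (fun t : ℝ => 1 / log t) (Set.Ioi 1) := fun t ht =>
    (continuousAt_const.div (continuousAt_log (zero_lt_one.trans ht).ne')
      (log_pos ht).ne').continuousWithinAt
  refine intervalIntegral.integral_hasDerivAt_right ?_
    (hc.stronglyMeasurableAtFilter isOpen_Ioi x hx) (hc.continuousAt (Ioi_mem_nhds hx))
  refine (hc.mono fun t ht => ?_).intervalIntegrable
  exact (lt_min one_lt_two hx).trans_le ht.1

theorem strictMonoOn_li : StrictMonoOn li (Set.Ioi 1) := by
  refine strictMonoOn_of_deriv_pos (convex_Ioi 1)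
    (fun t ht => (hasDerivAt_li ht).continuousAt.continuousWithinAt) fun t ht => ?_
  rw [interior_Ioi] at ht
  rw [(hasDerivAt_li ht).deriv]
  exact one_div_pos.2 (log_pos ht)

theorem li_pos {x : ℝ} (hx : 2 < x) : 0 < li x := by
  have := strictMonoOn_li (Set.mem_Ioi.2 one_lt_two) (Set.mem_Ioi.2 (one_lt_two.trans hx)) hx
  simpa [li] using this

/-- A primitive of `1 / li`. -/
noncomputable def liInvInt (x : ℝ) : ℝ := ∫ t in (3:ℝ)..x, 1 / li t

theorem hasDerivAt_liInvInt {x : ℝ} (hx : 2 < x) : HasDerivAt liInvInt (1 / li x) x := by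
  have hc : ContinuousOn (fun t : ℝ => 1 / li t) (Set.Ioi 2) := fun t ht =>
    (continuousAt_const.div (hasDerivAt_li (one_lt_two.trans ht)).continuousAt
      (li_pos ht).ne').continuousWithinAt
  refine intervalIntegral.integral_hasDerivAt_right ?_
    (hc.stronglyMeasurableAtFilter isOpen_Ioi x hx) (hc.continuousAt (Ioi_mem_nhds hx))
  refine (hc.mono fun t ht => ?_).intervalIntegrable
  exact (lt_min (by norm_num) hx).trans_le ht.1

theorem one_div_li_anti {x y : ℝ} (hx : 2 < x) (hxy : x ≤ y) : 1 / li y ≤ 1 / li x :=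
  one_div_le_one_div_of_le (li_pos hx)
    (strictMonoOn_li.monotoneOn (one_lt_two.trans hx) (one_lt_two.trans (hx.trans_le hxy)) hxy)

theorem liInvInt_sub_mem {x y : ℝ} (hx : 2 < x) (hxy : x ≤ y) :
    (y - x) * (1 / li y) ≤ liInvInt y - liInvInt x ∧
      liInvInt y - liInvInt x ≤ (y - x) * (1 / li x) := by
  rcases hxy.eq_or_lt with rfl | hlt
  · simp
  obtain ⟨c, hc, h⟩ := exists_hasDerivAt_eq_slope liInvInt (fun t => 1 / li t) hlt
    (fun t ht => (hasDerivAt_liInvInt (hx.trans_le ht.1)).continuousAt.continuousWithinAt)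
    (fun t ht => hasDerivAt_liInvInt (hx.trans ht.1))
  have h0 : 0 < y - x := sub_pos.2 hlt
  rw [eq_div_iff h0.ne'] at h
  rw [← h, mul_comm (1 / li c)]
  exact ⟨mul_le_mul_of_nonneg_left (one_div_li_anti (hx.trans hc.1) hc.2.le) h0.le,
    mul_le_mul_of_nonneg_left (one_div_li_anti hx hc.1.le) h0.le⟩

theorem sum_one_div_li_sub_liInvInt_nat {M N : ℕ} (hM : 3 ≤ M) (hMN : M ≤ N) :
    (∑ n ∈ Finset.Icc 3 N, 1 / li n) - liInvInt N ≤
        (∑ n ∈ Finset.Icc 3 M, 1 / li n) - liInvInt M ∧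
      (∑ n ∈ Finset.Icc 3 M, 1 / li n) - liInvInt M - 1 / li M ≤
        (∑ n ∈ Finset.Icc 3 N, 1 / li n) - liInvInt N - 1 / li N := by
  induction N, hMN using Nat.le_induction with
  | base => exact ⟨le_rfl, le_rfl⟩
  | succ N hN ih =>
    have h2 : (2 : ℝ) < N := by exact_mod_cast (by lia : 2 < N)
    have h := liInvInt_sub_mem h2 (le_add_of_nonneg_right zero_le_one)
    rw [Finset.sum_Icc_succ_top (by lia)]
    push_cast
    simp only [add_sub_cancel_left, one_mul] at h
    constructor <;> linarith

theorem abs_sum_one_div_li_sub_liInvInt_sub_le {x y : ℝ} (hx : 4 ≤ x) (hxy : x ≤ y) :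
    |((∑ n ∈ Finset.Icc 3 ⌊y⌋₊, 1 / li n) - liInvInt y) -
      ((∑ n ∈ Finset.Icc 3 ⌊x⌋₊, 1 / li n) - liInvInt x)| ≤ 2 * (1 / li (x - 1)) := by
  have hM : 3 ≤ ⌊x⌋₊ := Nat.le_floor (by push_cast; linarith)
  have hMN : ⌊x⌋₊ ≤ ⌊y⌋₊ := Nat.floor_mono hxy
  obtain ⟨h1, h2⟩ := sum_one_div_li_sub_liInvInt_nat hM hMN
  have hM2 : (2 : ℝ) < ⌊x⌋₊ := by exact_mod_cast hM
  have hMN' : (⌊x⌋₊ : ℝ) ≤ ⌊y⌋₊ := by exact_mod_cast hMN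
  have key : ∀ z : ℝ, x ≤ z → 0 ≤ liInvInt z - liInvInt ⌊z⌋₊ ∧
      liInvInt z - liInvInt ⌊z⌋₊ ≤ 1 / li (x - 1) := by
    intro z hz
    have hz1 := Nat.lt_floor_add_one z
    have hz0 : (⌊z⌋₊ : ℝ) ≤ z := Nat.floor_le (by linarith)
    have hz2 : (2 : ℝ) < ⌊z⌋₊ := by linarith
    obtain ⟨h3, h4⟩ := liInvInt_sub_mem hz2 hz0
    have h5 := one_div_pos.2 (li_pos (hz2.trans_le hz0))
    have h6 := one_div_pos.2 (li_pos hz2)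
    have h7 := one_div_li_anti (by linarith : 2 < x - 1) (by linarith : x - 1 ≤ ⌊z⌋₊)
    constructor <;> nlinarith
  have hkx := key x le_rfl
  have hky := key y hxy
  have h3 := one_div_pos.2 (li_pos (hM2.trans_le hMN'))
  have h4 := one_div_li_anti (by linarith : 2 < x - 1)
    (by linarith [Nat.lt_floor_add_one x] : x - 1 ≤ ⌊x⌋₊)
  rw [abs_le]
  constructor <;> linarith [hkx.1, hkx.2, hky.1, hky.2]

theorem one_div_li_sub_one_isBigO (m : ℕ) :
    (fun x : ℝ => 1 / li (x - 1)) =O[atTop] fun x => 1 / log x ^ m := by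
  have hlow : ∀ x : ℝ, 3 < x → (x - 3) / log x ≤ li (x - 1) := by
    intro x hx
    obtain ⟨c, hc, h⟩ := exists_hasDerivAt_eq_slope li (fun t => 1 / log t)
      (by linarith : 2 < x - 1)
      (fun t ht => (hasDerivAt_li (one_lt_two.trans_le ht.1)).continuousAt.continuousWithinAt)
      (fun t ht => hasDerivAt_li (one_lt_two.trans ht.1))
    have h2 : li 2 = 0 := by simp [li]
    rw [h2, eq_div_iff (by linarith [hc.1, hc.2])] at h
    have hlc : 0 < log c := log_pos (one_lt_two.trans hc.1)
    have := one_div_le_one_div_of_le hlc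
      (log_le_log (by linarith [hc.1]) (by linarith [hc.2] : c ≤ x))
    rw [sub_zero] at h
    rw [← h, div_eq_inv_mul, ← one_div, show x - 1 - 2 = x - 3 by ring]
    exact mul_le_mul_of_nonneg_right this (by linarith)
  have hlit := (isLittleO_pow_log_id_atTop (n := m + 1)).bound (c := 1 / 2) (by norm_num)
  refine Asymptotics.IsBigO.of_bound 1 ?_
  filter_upwards [hlit, eventually_ge_atTop 6] with x h1 hx
  have hl : 0 < log x := log_pos (by linarith)
  have hli := li_pos (by linarith : 2 < x - 1)
  rw [Real.norm_of_nonneg (by positivity), id, Real.norm_of_nonneg (by linarith)] at h1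
  rw [Real.norm_of_nonneg (by positivity), Real.norm_of_nonneg (by positivity), one_mul]
  refine one_div_le_one_div_of_le (by positivity) (le_trans ?_ (hlow x (by linarith)))
  rw [le_div_iff₀ hl, ← pow_succ]
  linarith

theorem hasDerivAt_inv_log_pow {x : ℝ} (hx : 1 < x) (n : ℕ) :
    HasDerivAt (fun t => (log t)⁻¹ ^ n) (-(n * (log x)⁻¹ ^ (n + 1) / x)) x := by
  have hl : log x ≠ 0 := (log_pos hx).ne'
  have hx0 : x ≠ 0 := by positivity
  refine (((hasDerivAt_log hx0).fun_inv hl).fun_pow n).congr_deriv ?_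
  rcases n with _ | n
  · simp
  · simp only [Nat.add_sub_cancel, inv_pow]
    field_simp
    ring

theorem hasDerivAt_mul_inv_log_pow {x : ℝ} (hx : 1 < x) (n : ℕ) :
    HasDerivAt (fun t => t * (log t)⁻¹ ^ n) ((log x)⁻¹ ^ n - n * (log x)⁻¹ ^ (n + 1)) x := by
  have hx0 : x ≠ 0 := by positivity
  refine ((hasDerivAt_id' x).fun_mul (hasDerivAt_inv_log_pow hx n)).congr_deriv ?_
  field_simp
  ring

theorem tendsto_inv_log : Tendsto (fun x : ℝ => (log x)⁻¹) atTop (nhds 0) :=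
  tendsto_inv_atTop_zero.comp tendsto_log_atTop

theorem const_isBigO_mul_inv_log_pow (c : ℝ) (n : ℕ) :
    (fun _ : ℝ => c) =O[atTop] fun x : ℝ => x * (log x)⁻¹ ^ n := by
  refine (Asymptotics.isBigO_const_const c (one_ne_zero (α := ℝ)) atTop).trans ?_
  have h := (isLittleO_pow_log_id_atTop (n := n)).bound (c := 1) one_pos
  refine Asymptotics.IsBigO.of_bound 1 ?_
  filter_upwards [h, eventually_gt_atTop 1] with x h1 hx
  have hl : 0 < log x := log_pos hx
  rw [Real.norm_of_nonneg (by positivity), id, Real.norm_of_nonneg (by positivity), one_mul] at h1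
  rw [norm_one, Real.norm_of_nonneg (by positivity), one_mul, inv_pow, ← div_eq_mul_inv,
    le_div_iff₀ (by positivity), one_mul]
  exact h1

theorem li_sub_sum_isBigO (M : ℕ) :
    (fun x => li x - ∑ i ∈ Finset.range M, (i.factorial : ℝ) * (x * (log x)⁻¹ ^ (i + 1)))
      =O[atTop] fun x => x * (log x)⁻¹ ^ (M + 1) := by
  set P : ℝ → ℝ := fun x =>
    li x - ∑ i ∈ Finset.range M, (i.factorial : ℝ) * (x * (log x)⁻¹ ^ (i + 1)) with hP
  have hderiv : ∀ x : ℝ, 1 < x → HasDerivAt P (M.factorial * (log x)⁻¹ ^ (M + 1)) x := by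
    intro x hx
    have h := (hasDerivAt_li hx).fun_sub (HasDerivAt.fun_sum (u := Finset.range M)
      (fun i _ => (hasDerivAt_mul_inv_log_pow hx (i + 1)).const_mul (i.factorial : ℝ)))
    refine h.congr_deriv ?_
    clear h hP P
    induction M with
    | zero => simp
    | succ M ih =>
      rw [Finset.sum_range_succ, ← sub_sub, ih, Nat.factorial_succ]
      push_cast
      ring
  obtain ⟨a, ha⟩ := eventually_atTop.1 ((tendsto_inv_log.eventually
    (ge_mem_nhds (show (0 : ℝ) < 1 / (2 * (M + 1)) by positivity))).and (eventually_gt_atTop 1))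
  have hb : ∀ x, a ≤ x → |P x - P a| ≤
      2 * M.factorial * (x * (log x)⁻¹ ^ (M + 1)) -
        2 * M.factorial * (a * (log a)⁻¹ ^ (M + 1)) := by
    intro x hx
    refine abs_sub_le_sub_of_abs_deriv_le (fun t ht => hderiv t (ha t ht).2)
      (fun t ht => (hasDerivAt_mul_inv_log_pow (ha t ht).2 (M + 1)).const_mul
        (2 * (M.factorial : ℝ))) (fun t ht => ?_) le_rfl hx
    obtain ⟨h1, h2⟩ := ha t ht
    have hl := inv_pos.2 (log_pos h2)
    rw [abs_of_nonneg (by positivity)]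
    rw [le_div_iff₀ (by positivity)] at h1
    have h3 : (0 : ℝ) ≤ M.factorial * (log t)⁻¹ ^ (M + 1) := by positivity
    push_cast
    rw [pow_succ _ (M + 1)]
    nlinarith [mul_nonneg h3 (sub_nonneg.2 h1)]
  have h1 : (fun x => P x - P a) =O[atTop] fun x => x * (log x)⁻¹ ^ (M + 1) := by
    refine Asymptotics.IsBigO.of_bound (2 * M.factorial) ?_
    filter_upwards [eventually_ge_atTop a] with x hx
    have hl := inv_pos.2 (log_pos (ha x hx).2)
    have hla := inv_pos.2 (log_pos (ha a le_rfl).2)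
    have hx1 := (ha x hx).2
    have ha1 := (ha a le_rfl).2
    rw [Real.norm_eq_abs, Real.norm_of_nonneg (by positivity)]
    have : 0 ≤ 2 * M.factorial * (a * (log a)⁻¹ ^ (M + 1)) := by positivity
    linarith [hb x hx]
  simpa using h1.add (const_isBigO_mul_inv_log_pow (P a) (M + 1))

theorem one_div_li_isBigO :
    (fun x => 1 / li x) =O[atTop] fun x => 1 / (x * (log x)⁻¹) := by
  have h : Asymptotics.IsEquivalent atTop li (fun x => x * (log x)⁻¹) := by
    have h1 := li_sub_sum_isBigO 1
    simp only [Finset.sum_range_one, Nat.factorial_zero, Nat.cast_one, one_mul, zero_add,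
      pow_one] at h1
    refine h1.trans_isLittleO ?_
    have h2 := (Asymptotics.isBigO_refl (fun x : ℝ => x * (log x)⁻¹) atTop).mul_isLittleO
      ((Asymptotics.isLittleO_one_iff ℝ).2 tendsto_inv_log)
    simpa [pow_two, mul_assoc] using h2
  simpa only [one_div] using h.isBigO_symm.inv_rev (by
    filter_upwards [eventually_gt_atTop 1] with x hx h0
    have := log_pos hx
    have : x * (log x)⁻¹ ≠ 0 := by positivity
    exact absurd h0 this)

/-- The coefficients of the formal reciprocal of `∑ i! zⁱ`. -/
noncomputable def recipCoeff (k : ℕ → ℝ) : ℕ → ℝ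
  | 0 => 1
  | 1 => -1
  | n + 2 => -k (n + 1)

theorem sum_factorial_mul_recipCoeff {k : ℕ → ℝ}
    (hk : ∀ j : ℕ, 1 ≤ j →
      ∑ i ∈ Finset.range j, (Nat.factorial i : ℝ) * k (j - i) = j * Nat.factorial j)
    (d : ℕ) :
    ∑ i ∈ Finset.range (d + 1), (i.factorial : ℝ) * recipCoeff k (d - i) =
      if d = 0 then 1 else 0 := by
  rcases d with _ | _ | d
  · simp [recipCoeff]
  · simp [Finset.sum_range_succ, recipCoeff]
  · have h : ∑ i ∈ Finset.range (d + 1), (i.factorial : ℝ) * recipCoeff k (d + 2 - i) =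
        -∑ i ∈ Finset.range (d + 1), (i.factorial : ℝ) * k (d + 1 - i) := by
      rw [← Finset.sum_neg_distrib]
      refine Finset.sum_congr rfl fun i hi => ?_
      have hi := Finset.mem_range.1 hi
      rw [show d + 2 - i = (d - i) + 2 by lia, show d + 1 - i = d - i + 1 by lia, recipCoeff]
      ring
    rw [Finset.sum_range_succ, Finset.sum_range_succ, h, hk (d + 1) (by lia), Nat.sub_self,
      show d + 1 + 1 - (d + 1) = 1 by lia, Nat.factorial_succ (d + 1)]
    simp only [recipCoeff]
    push_cast
    simp
    ring

open Polynomial in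
theorem exists_factorial_sum_mul_recipCoeff_sum {k : ℕ → ℝ}
    (hk : ∀ j : ℕ, 1 ≤ j →
      ∑ i ∈ Finset.range j, (Nat.factorial i : ℝ) * k (j - i) = j * Nat.factorial j)
    (M : ℕ) :
    ∃ R : ℝ[X], ∀ z : ℝ, (∑ i ∈ Finset.range M, (i.factorial : ℝ) * z ^ i) *
      (∑ n ∈ Finset.range M, recipCoeff k n * z ^ n) = 1 + z ^ M * R.eval z := by
  set p : ℝ[X] := ∑ i ∈ Finset.range M, C (i.factorial : ℝ) * X ^ i with hp
  set q : ℝ[X] := ∑ n ∈ Finset.range M, C (recipCoeff k n) * X ^ n with hq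
  have hdvd : X ^ M ∣ p * q - 1 := by
    rw [X_pow_dvd_iff]
    intro d hd
    rw [coeff_sub, coeff_mul, coeff_one, Finset.Nat.sum_antidiagonal_eq_sum_range_succ
      (fun i j => p.coeff i * q.coeff j), sub_eq_zero]
    refine (Finset.sum_congr rfl fun i hi => ?_).trans (sum_factorial_mul_recipCoeff hk d)
    have hi := Finset.mem_range.1 hi
    have h1 : i < M := by lia
    have h2 : d - i < M := by lia
    simp [hp, hq, finsetSum_coeff, coeff_C_mul, coeff_X_pow, h1, h2]
  obtain ⟨R, hR⟩ := hdvd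
  refine ⟨R, fun z => ?_⟩
  have h := congrArg (eval z) hR
  simp only [hp, hq, eval_sub, eval_mul, eval_finsetSum, eval_C, eval_pow, eval_X, eval_one] at h
  linarith

theorem one_div_li_sub_isBigO {k : ℕ → ℝ}
    (hk : ∀ j : ℕ, 1 ≤ j →
      ∑ i ∈ Finset.range j, (Nat.factorial i : ℝ) * k (j - i) = j * Nat.factorial j)
    (m : ℕ) :
    (fun x => 1 / li x -
      (∑ n ∈ Finset.range (m + 2), recipCoeff k n * (log x)⁻¹ ^ n) * log x / x)
      =O[atTop] fun x => (log x)⁻¹ ^ (m + 1) / x := by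
  obtain ⟨R, hR⟩ := exists_factorial_sum_mul_recipCoeff_sum hk (m + 2)
  have hbdd : ∀ f : ℝ → ℝ, Continuous f →
      (fun x => f (log x)⁻¹) =O[atTop] fun _ => (1 : ℝ) := fun f hf =>
    ((hf.tendsto 0).comp tendsto_inv_log).isBigO_one ℝ
  set q : ℝ → ℝ := fun z => ∑ n ∈ Finset.range (m + 2), recipCoeff k n * z ^ n with hq
  have hqc : Continuous q := by fun_prop
  have hnum : (fun x => x * (log x)⁻¹ - q (log x)⁻¹ * li x) =O[atTop]
      fun x => x * (log x)⁻¹ ^ (m + 3) := by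
    have h1 := (hbdd _ hqc).mul (li_sub_sum_isBigO (m + 2))
    have h2 := (hbdd _ R.continuous).mul
      (Asymptotics.isBigO_refl (fun x : ℝ => x * (log x)⁻¹ ^ (m + 3)) atTop)
    simp only [one_mul] at h1 h2
    refine (h1.add h2).neg_left.congr_left fun x => ?_
    have h3 := hR (log x)⁻¹
    have h4 : ∑ i ∈ Finset.range (m + 2), (i.factorial : ℝ) * (x * (log x)⁻¹ ^ (i + 1)) =
        x * (log x)⁻¹ * ∑ i ∈ Finset.range (m + 2), (i.factorial : ℝ) * (log x)⁻¹ ^ i := by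
      rw [Finset.mul_sum]
      exact Finset.sum_congr rfl fun i _ => by ring
    rw [h4]
    linear_combination (x * (log x)⁻¹) * h3
  have h := (hnum.mul one_div_li_isBigO).mul
    (Asymptotics.isBigO_refl (fun x : ℝ => log x / x) atTop)
  refine h.congr' ?_ ?_
  · filter_upwards [eventually_gt_atTop 2] with x hx
    have := (li_pos hx).ne'
    have := (log_pos (by linarith : 1 < x)).ne'
    change _ = 1 / li x - q (log x)⁻¹ * log x / x
    field_simp
  · filter_upwards [eventually_gt_atTop 2] with x hx
    have := (log_pos (by linarith : 1 < x)).ne'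
    simp only [inv_pow]
    field_simp
    ring

theorem sum_recipCoeff_mul_pow {k : ℕ → ℝ} (hk1 : k 1 = 1) {m : ℕ} (hm : 1 ≤ m) (z : ℝ) :
    ∑ n ∈ Finset.range (m + 2), recipCoeff k n * z ^ n =
      1 - z - z ^ 2 - ∑ j ∈ Finset.Icc 2 m, k j * z ^ (j + 1) := by
  induction m, hm using Nat.le_induction with
  | base => simp [Finset.sum_range_succ, recipCoeff, hk1]; ring
  | succ m hm ih =>
    rw [Finset.sum_range_succ, ih, Finset.sum_Icc_succ_top (by lia), recipCoeff]
    ring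

theorem hasDerivAt_integrated_expansion {k : ℕ → ℝ} (hk1 : k 1 = 1) {m : ℕ} (hm : 1 ≤ m)
    {x : ℝ} (hx : 1 < x) :
    HasDerivAt (fun x => (1 / 2) * (log x) ^ 2 - log x - log (log x) +
        ∑ j ∈ Finset.Icc 2 m, k j / (((j : ℝ) - 1) * (log x) ^ (j - 1)))
      ((∑ n ∈ Finset.range (m + 2), recipCoeff k n * (log x)⁻¹ ^ n) * log x / x) x := by
  have hx0 : x ≠ 0 := by positivity
  have hl : log x ≠ 0 := (log_pos hx).ne'
  have hlog := hasDerivAt_log hx0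
  have hsum : HasDerivAt
      (fun x => ∑ j ∈ Finset.Icc 2 m, k j / (((j : ℝ) - 1) * (log x) ^ (j - 1)))
      (∑ j ∈ Finset.Icc 2 m, -(k j * (log x)⁻¹ ^ (j + 1) * log x / x)) x := by
    refine HasDerivAt.fun_sum fun j hj => ?_
    obtain ⟨n, rfl⟩ := Nat.exists_eq_add_of_le (Finset.mem_Icc.1 hj).1
    have h := (hasDerivAt_inv_log_pow hx (n + 1)).const_mul (k (2 + n) / (n + 1))
    have hn : (n : ℝ) + 1 ≠ 0 := by positivity
    have hf : (fun t => k (2 + n) / (((2 + n : ℕ) - 1 : ℝ) * (log t) ^ (2 + n - 1))) =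
        fun t => k (2 + n) / (n + 1) * (log t)⁻¹ ^ (n + 1) := by
      ext t
      rw [show 2 + n - 1 = n + 1 by lia]
      push_cast
      rw [show (2 + n - 1 : ℝ) = n + 1 by ring, inv_pow, ← div_eq_mul_inv, div_div]
    rw [hf]
    refine h.congr_deriv ?_
    simp only [inv_pow]
    push_cast
    field_simp
    ring
  refine (((((hlog.fun_pow 2).const_mul (1 / 2)).fun_sub hlog).fun_sub
    (hlog.log hl)).fun_add hsum).congr_deriv ?_
  rw [sum_recipCoeff_mul_pow hk1 hm, Finset.sum_neg_distrib, ← Finset.sum_div, ← Finset.sum_mul]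
  field_simp
  ring

theorem exists_sum_one_div_li_expansion {k : ℕ → ℝ}
    (hk : ∀ j : ℕ, 1 ≤ j →
      ∑ i ∈ Finset.range j, (Nat.factorial i : ℝ) * k (j - i) = j * Nat.factorial j)
    {m : ℕ} (hm : 1 ≤ m) :
    ∃ E : ℝ, (fun x : ℝ => (∑ n ∈ Finset.Icc 3 ⌊x⌋₊, 1 / li n) -
        ((1 / 2) * (log x) ^ 2 - log x - log (log x) +
          ∑ j ∈ Finset.Icc 2 m, k j / (((j : ℝ) - 1) * (log x) ^ (j - 1))) - E)
      =O[atTop] fun x => 1 / log x ^ m := by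
  have hk1 : k 1 = 1 := by simpa using hk 1 le_rfl
  obtain ⟨K, hK0, hK⟩ := (one_div_li_sub_isBigO hk m).exists_pos
  obtain ⟨a, ha⟩ := eventually_atTop.1 (hK.bound.and (eventually_ge_atTop 4))
  have hm0 : (m : ℝ) ≠ 0 := by positivity
  set B : ℝ → ℝ := fun x => 2 * (1 / li (x - 1)) + K / m * (log x)⁻¹ ^ m with hB
  have hBO : B =O[atTop] fun x => 1 / log x ^ m := by
    refine ((one_div_li_sub_one_isBigO m).const_mul_left 2).add ?_
    simp only [one_div, inv_pow]
    exact (Asymptotics.isBigO_refl _ _).const_mul_left _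
  have hlim : Tendsto (fun x : ℝ => 1 / log x ^ m) atTop (nhds 0) := by
    simpa [(by lia : m ≠ 0)] using tendsto_inv_log.pow m
  obtain ⟨E, hE⟩ := exists_isBigO_sub_of_abs_sub_le (a := a) (B := B)
    (D := fun x : ℝ => (∑ n ∈ Finset.Icc 3 ⌊x⌋₊, 1 / li n) -
        ((1 / 2) * (log x) ^ 2 - log x - log (log x) +
          ∑ j ∈ Finset.Icc 2 m, k j / (((j : ℝ) - 1) * (log x) ^ (j - 1)))) (by
    intro x hx y hxy
    have h1 := abs_le.1 (abs_sum_one_div_li_sub_liInvInt_sub_le (ha x hx).2 hxy)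
    have h2 := abs_le.1 (abs_sub_le_sub_of_abs_deriv_le (a := a)
      (fun t ht => (hasDerivAt_liInvInt (by linarith [(ha t ht).2])).sub
        (hasDerivAt_integrated_expansion hk1 hm (by linarith [(ha t ht).2])))
      (fun t ht => (hasDerivAt_inv_log_pow (by linarith [(ha t ht).2]) m).const_mul (-(K / m)))
      (fun t ht => by
        obtain ⟨h3, h4⟩ := ha t ht
        have hl := inv_pos.2 (log_pos (by linarith : 1 < t))
        have ht0 : 0 < t := by linarith
        rw [Real.norm_eq_abs, Real.norm_of_nonneg (by positivity)] at h3
        refine h3.trans_eq ?_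
        field_simp) hx hxy)
    have hl := inv_pos.2 (log_pos (by linarith [(ha y (hx.trans hxy)).2] : 1 < y))
    have h5 : 0 ≤ K / m * (log y)⁻¹ ^ m := by positivity
    simp only [Pi.sub_apply] at h2
    simp only [hB]
    rw [abs_le]
    constructor <;> linarith [h1.1, h1.2, h2.1, h2.2]) (hBO.trans_tendsto hlim)
  exact ⟨E, hE.trans hBO⟩

theorem sum_one_div_li_asymptotic (k : ℕ → ℝ)
    (hk : ∀ j : ℕ, 1 ≤ j →
      ∑ i ∈ Finset.range j, (Nat.factorial i : ℝ) * k (j - i) =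
        j * Nat.factorial j) :
    ∃ E : ℝ, ∀ m : ℕ, 2 ≤ m →
      (fun x : ℝ => (∑ n ∈ Finset.Icc 3 ⌊x⌋₊, 1 / li n) -
          ((1 / 2) * (Real.log x) ^ 2 - Real.log x - Real.log (Real.log x) + E +
            ∑ j ∈ Finset.Icc 2 m, k j / (((j : ℝ) - 1) * (Real.log x) ^ (j - 1))))
        =O[atTop] (fun x : ℝ => 1 / (Real.log x) ^ m) := by
  have hlim : ∀ m : ℕ, 1 ≤ m → ∀ E : ℝ,
      (fun x : ℝ => (∑ n ∈ Finset.Icc 3 ⌊x⌋₊, 1 / li n) -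
        ((1 / 2) * (log x) ^ 2 - log x - log (log x) +
          ∑ j ∈ Finset.Icc 2 m, k j / (((j : ℝ) - 1) * (log x) ^ (j - 1))) - E)
        =O[atTop] (fun x => 1 / log x ^ m) →
      Tendsto (fun x : ℝ => (∑ n ∈ Finset.Icc 3 ⌊x⌋₊, 1 / li n) -
        ((1 / 2) * (log x) ^ 2 - log x - log (log x))) atTop (nhds E) := by
    intro m hm E hE
    have h0 : ∀ n : ℕ, n ≠ 0 → Tendsto (fun x : ℝ => 1 / log x ^ n) atTop (nhds 0) := by
      intro n hn
      simpa [hn] using tendsto_inv_log.pow n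
    have hs : Tendsto
        (fun x => ∑ j ∈ Finset.Icc 2 m, k j / (((j : ℝ) - 1) * (log x) ^ (j - 1)))
        atTop (nhds (∑ j ∈ Finset.Icc 2 m, k j / ((j : ℝ) - 1) * 0)) := by
      refine tendsto_finsetSum _ fun j hj => ?_
      have hj := (Finset.mem_Icc.1 hj).1
      refine ((h0 (j - 1) (by lia)).const_mul (k j / ((j : ℝ) - 1))).congr fun x => ?_
      rw [div_mul_div_comm, mul_one]
    have h := ((hE.trans_tendsto (h0 m (by lia))).add hs).add_const E
    simp only [mul_zero, Finset.sum_const_zero, zero_add] at h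
    exact h.congr fun x => by ring
  obtain ⟨E, hE⟩ := exists_sum_one_div_li_expansion hk (m := 1) le_rfl
  refine ⟨E, fun m hm => ?_⟩
  have hm1 : 1 ≤ m := by lia
  obtain ⟨E', hE'⟩ := exists_sum_one_div_li_expansion hk hm1
  obtain rfl := tendsto_nhds_unique (hlim 1 le_rfl E hE) (hlim m hm1 E' hE')
  exact hE'.congr_left fun x => by ring
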